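/- Let I be a fat points ideal in P^2 and M the irrelevant ideal. If α(I^{(2r)}) ≥ r·(reg(I) + 1), then I^{(2r)} ⊆ M^r · I^r. -/

import Mathlib

/-- The initial degree `α(I)`: the least degree of a nonzero element of `I`. -/
noncomputable def initialDegree {N : ℕ}
    (I : Ideal (MvPolynomial (Fin N) ℂ)) : ℕ :=
  sInf {d | ∃ f ∈ I, f ≠ 0 ∧ f.totalDegree = d}

/-- The Hilbert function of `R/I` in degree `d`, where `R = ℂ[x_0, x_1, x_2]`. -/
noncomputable def quotientHilbert {N : ℕ}
    (I : Ideal (MvPolynomial (Fin N) ℂ)) (d : ℕ) : ℕ :=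
  Module.finrank ℂ (MvPolynomial.homogeneousSubmodule (Fin N) ℂ d) -
    Module.finrank ℂ
      ((MvPolynomial.homogeneousSubmodule (Fin N) ℂ d ⊓
        Submodule.restrictScalars ℂ I : Submodule ℂ (MvPolynomial (Fin N) ℂ)))

/-- The Castelnuovo–Mumford regularity of a saturated homogeneous ideal with
zero-dimensional support (e.g. a fat points ideal): the least `t` such that
the Hilbert function of `R/I` is constant in all degrees `≥ t − 1`. -/
noncomputable def regCM {N : ℕ} (I : Ideal (MvPolynomial (Fin N) ℂ)) : ℕ :=
  sInf {t | ∀ d : ℕ, t ≤ d + 1 → quotientHilbert I d = quotientHilbert I (d + 1)}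

/-- The homogeneous ideal `𝔪_P` of a point `P ∈ ℙ²` with homogeneous
coordinates `p ≠ 0`: the ideal generated by all linear forms vanishing at `p`. -/
noncomputable def pointIdeal (p : Fin 3 → ℂ) : Ideal (MvPolynomial (Fin 3) ℂ) :=
  Ideal.span {f | f ∈ MvPolynomial.homogeneousSubmodule (Fin 3) ℂ 1 ∧
    MvPolynomial.eval p f = 0}

/-!
Let `I = ⨅ i, 𝔪_i ^ m_i`, let `n` be its regularity, let `K = I ⊓ M ^ n`, and let `L` be a linear
form vanishing at none of the points. Then `K` is generated in degree `n`, contains `M ^ n` modulo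
`L`, and `L` is a nonzerodivisor modulo `K` in degrees `≥ n`.

The key point is that these three properties pass to products, hence to `K ^ r`. Let `I₁` and `I₂`
have them in degrees `a` and `b`, and let `L f ∈ I₁ I₂` with `f ∈ M ^ (a + b)`. For reasons of
degree `L f ∈ M I₁ I₂`, so `L f = ∑ h_c g_c + L q` with `h_c ∈ M I₂`, `q ∈ I₁ I₂`, and `g_c ∈ I₁`
restricting to the monomials of degree `a` on the line `L = 0`. There `h` is a syzygy of these
monomials, hence a combination of the rows of the Hilbert–Burch matrix, with coefficients in the
restriction of `I₂`. The matrix with linear entries that lifts it sends `g` into `L I₁`, so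
subtracting a lift of that combination shows `f ∈ I₁ I₂`.

Let now `f ∈ ⨅ i, 𝔪_i ^ (q m_i)` with `q ≥ r`. Since `M ≤ 𝔪_i ⊔ 𝔪_j` for distinct points, some
power `L ^ N` multiplies `f` into `∏ i, 𝔪_i ^ (r m_i) ≤ I ^ r`, so that `L ^ (N + n r) f ∈ K ^ r`.
As `f` has order at least `r (n + 1)`, the powers of `L` cancel and `f ∈ K ^ r`. Finally `K ^ r` is
generated in degree `r n`, so the `r` additional degrees of `f` give `f ∈ M ^ r K ^ r`.
-/

open MvPolynomial

namespace FatPoints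

section Order

variable {σ R : Type*} [CommSemiring R]

theorem mem_pow_idealOfVars_iff_homogeneousComponent {n : ℕ} {f : MvPolynomial σ R} :
    f ∈ idealOfVars σ R ^ n ↔ ∀ i < n, homogeneousComponent i f = 0 := by
  simp only [mem_pow_idealOfVars_iff', MvPolynomial.ext_iff, coeff_homogeneousComponent,
    coeff_zero, ite_eq_right_iff]
  exact ⟨fun h i hi d hd ↦ h d (hd ▸ hi), fun h d hd ↦ h _ hd d rfl⟩

theorem mem_pow_idealOfVars_of_isHomogeneous {n : ℕ} {f : MvPolynomial σ R}
    (hf : f.IsHomogeneous n) : f ∈ idealOfVars σ R ^ n :=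
  mem_pow_idealOfVars_iff_homogeneousComponent.2 fun _ hi ↦ by
    rw [homogeneousComponent_of_mem hf, if_neg hi.ne]

theorem pow_idealOfVars_le_iff {n : ℕ} {I : Ideal (MvPolynomial σ R)} :
    idealOfVars σ R ^ n ≤ I ↔ ∀ p : MvPolynomial σ R, p.IsHomogeneous n → p ∈ I := by
  refine ⟨fun h p hp ↦ h (mem_pow_idealOfVars_of_isHomogeneous hp), fun h ↦ ?_⟩
  rw [pow_idealOfVars_eq_span, Ideal.span_le]
  rintro _ ⟨x, hx, rfl⟩
  exact h _ (isHomogeneous_monomial 1 hx)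

attribute [local instance] gradedAlgebra in
theorem homogeneousComponent_add_mul {n : ℕ} {g : MvPolynomial σ R} (hg : g.IsHomogeneous n)
    (i : ℕ) (u : MvPolynomial σ R) :
    homogeneousComponent (n + i) (g * u) = g * homogeneousComponent i u := by
  simp only [← decomposition.decompose'_apply]
  exact DirectSum.coe_decompose_mul_add_of_left_mem (homogeneousSubmodule σ R) hg

theorem mem_pow_idealOfVars_of_mul_mem [NoZeroDivisors R] {d n : ℕ} {g u : MvPolynomial σ R}
    (hg : g.IsHomogeneous d) (hg0 : g ≠ 0) (hu : g * u ∈ idealOfVars σ R ^ (d + n)) :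
    u ∈ idealOfVars σ R ^ n := by
  rw [mem_pow_idealOfVars_iff_homogeneousComponent] at hu ⊢
  intro i hi
  have h := hu (d + i) (by omega)
  rw [homogeneousComponent_add_mul hg] at h
  exact (mul_eq_zero.1 h).resolve_left hg0

end Order

section GeneratedInDegree

variable {σ R : Type*} [CommSemiring R] {m n : ℕ} {I K : Ideal (MvPolynomial σ R)}

/-- The ideal `K` is generated by forms of degree `n`. -/
def GeneratedInDegree (n : ℕ) (K : Ideal (MvPolynomial σ R)) : Prop :=
  ∃ G : Set (MvPolynomial σ R), (∀ g ∈ G, g.IsHomogeneous n) ∧ K = Ideal.span G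

theorem generatedInDegree_top : GeneratedInDegree 0 (⊤ : Ideal (MvPolynomial σ R)) :=
  ⟨{1}, by simpa using isHomogeneous_one σ R, by simp⟩

theorem GeneratedInDegree.mul (hI : GeneratedInDegree m I) (hK : GeneratedInDegree n K) :
    GeneratedInDegree (m + n) (I * K) := by
  obtain ⟨G, hG, rfl⟩ := hI
  obtain ⟨H, hH, rfl⟩ := hK
  refine ⟨_, ?_, Ideal.span_mul_span' G H⟩
  rintro _ ⟨g, hg, h, hh, rfl⟩
  exact (hG g hg).mul (hH h hh)

theorem GeneratedInDegree.le_pow (hK : GeneratedInDegree n K) : K ≤ idealOfVars σ R ^ n := by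
  obtain ⟨G, hG, rfl⟩ := hK
  exact Ideal.span_le.2 fun g hg ↦ mem_pow_idealOfVars_of_isHomogeneous (hG g hg)

theorem GeneratedInDegree.homogeneousComponent_add_mem (hK : GeneratedInDegree n K)
    {f : MvPolynomial σ R} (hf : f ∈ K) (i : ℕ) :
    homogeneousComponent (n + i) f ∈ idealOfVars σ R ^ i * K := by
  obtain ⟨G, hG, rfl⟩ := hK
  induction hf using Submodule.closure_induction with
  | zero => simp
  | add _ _ _ _ hx hy => simpa only [map_add] using add_mem hx hy
  | smul_mem c g hg =>
    rw [smul_eq_mul, mul_comm c, homogeneousComponent_add_mul (hG g hg), mul_comm g]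
    exact Ideal.mul_mem_mul
      (mem_pow_idealOfVars_of_isHomogeneous (homogeneousComponent_isHomogeneous i c))
      (Ideal.subset_span hg)

theorem GeneratedInDegree.inf_pow_le (hK : GeneratedInDegree n K) (j : ℕ) :
    K ⊓ idealOfVars σ R ^ (j + n) ≤ idealOfVars σ R ^ j * K := by
  rintro f ⟨hf, hfpow⟩
  rw [← sum_homogeneousComponent f]
  refine sum_mem fun d _ ↦ ?_
  obtain hd | hd := lt_or_ge d (j + n)
  · rw [mem_pow_idealOfVars_iff_homogeneousComponent.1 hfpow d hd]
    exact zero_mem _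
  · obtain ⟨i, rfl⟩ := Nat.exists_eq_add_of_le (le_of_add_le_right hd)
    exact Ideal.mul_mono_left (Ideal.pow_le_pow_right (by omega))
      (hK.homogeneousComponent_add_mem hf i)

theorem GeneratedInDegree.mul_mem_pow_mul (hK : GeneratedInDegree n K) {d : ℕ}
    {g f : MvPolynomial σ R} (hg : g.IsHomogeneous d) (hf : f ∈ idealOfVars σ R ^ n)
    (hgf : g * f ∈ K) : g * f ∈ idealOfVars σ R ^ d * K := by
  refine hK.inf_pow_le d ⟨hgf, ?_⟩
  rw [pow_add]
  exact Ideal.mul_mem_mul (mem_pow_idealOfVars_of_isHomogeneous hg) hf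

end GeneratedInDegree

section HilbertBurch

open Matrix

variable {A B : Type*} [CommRing A] [CommRing B]

/-- The monomials `x ^ a * y ^ (n - a)` of degree `n`, listed as a vector. -/
def binaryMonomials (x y : A) (n : ℕ) : Fin (n + 1) → A := fun a ↦ x ^ (a : ℕ) * y ^ (n - a)

/-- The Hilbert–Burch matrix of the ideal `(x, y) ^ n`: its rows are the Koszul relations between
consecutive entries of `binaryMonomials x y n`. -/
def hilbertBurch (x y : A) (n : ℕ) : Matrix (Fin n) (Fin (n + 1)) A :=
  .of fun b ↦ Pi.single b.succ y - Pi.single b.castSucc x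

theorem binaryMonomials_succ (x y : A) (n : ℕ) :
    binaryMonomials x y (n + 1) = vecCons (y ^ (n + 1)) (x • binaryMonomials x y n) := by
  ext a
  refine Fin.cases (by simp [binaryMonomials]) (fun a ↦ ?_) a
  simp [binaryMonomials, pow_succ', mul_assoc]

theorem hilbertBurch_mulVec_apply (x y : A) {n : ℕ} (g : Fin (n + 1) → A) (b : Fin n) :
    (hilbertBurch x y n *ᵥ g) b = y * g b.succ - x * g b.castSucc := by
  change (Pi.single b.succ y - Pi.single b.castSucc x) ⬝ᵥ g = _
  simp [sub_dotProduct]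

theorem hilbertBurch_mulVec_binaryMonomials (x y : A) (n : ℕ) :
    hilbertBurch x y n *ᵥ binaryMonomials x y n = 0 := by
  ext b
  obtain ⟨j, hj⟩ := Nat.exists_eq_add_of_lt b.is_lt
  have hsucc : n - (b + 1) = j := by omega
  have hcast : n - b = j + 1 := by omega
  simp only [hilbertBurch_mulVec_apply, binaryMonomials, Fin.val_succ, Fin.val_castSucc, hsucc,
    hcast, Pi.zero_apply]
  ring

theorem hilbertBurch_map (f : A →+* B) (x y : A) (n : ℕ) :
    (hilbertBurch x y n).map f = hilbertBurch (f x) (f y) n := by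
  ext b a
  simp [hilbertBurch, Pi.single_apply, apply_ite f]

theorem hilbertBurch_apply_mem {x y : A} {I : Ideal A} (hx : x ∈ I) (hy : y ∈ I) {n : ℕ}
    (b : Fin n) (a : Fin (n + 1)) : hilbertBurch x y n b a ∈ I := by
  simp only [hilbertBurch, of_apply, Pi.sub_apply, Pi.single_apply]
  split_ifs
  exacts [sub_mem hy hx, sub_mem hy (zero_mem I), sub_mem (zero_mem I) hx,
    sub_mem (zero_mem I) (zero_mem I)]

theorem hilbertBurch_succ (x y : A) (n : ℕ) :
    hilbertBurch x y (n + 1) = .of (vecCons (vecCons (-x) (Pi.single 0 y))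
      fun b ↦ vecCons 0 (hilbertBurch x y n b)) := by
  ext b a
  refine Fin.cases ?_ (fun b ↦ ?_) b <;> refine Fin.cases ?_ (fun a ↦ ?_) a <;>
    simp only [hilbertBurch, of_apply, Pi.sub_apply, Pi.single_apply, cons_val_zero,
      cons_val_succ, Fin.ext_iff, Fin.val_succ, Fin.val_castSucc, Fin.val_zero] <;> simp

theorem vecCons_vecMul_hilbertBurch (x y b : A) {n : ℕ} (c : Fin n → A) :
    vecCons b c ᵥ* hilbertBurch x y (n + 1) =
      vecCons (-(b * x)) (Pi.single 0 (b * y) + c ᵥ* hilbertBurch x y n) := by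
  rw [hilbertBurch_succ, cons_vecMul_cons]
  ext a
  refine Fin.cases ?_ (fun a ↦ ?_) a
  · simp [vecMul, dotProduct]
  · simp [vecMul, dotProduct, Pi.single_apply]

theorem exists_vecMul_hilbertBurch_eq [IsDomain A] {x y : A} (hx : Prime x) (hxy : ¬x ∣ y)
    {M N : Ideal A} (hy : ∀ b ∈ N, b * y ∈ M) (hM : ∀ b, x * b ∈ M → b ∈ N) :
    ∀ {n : ℕ} {h : Fin (n + 1) → A}, (∀ a, h a ∈ M) → h ⬝ᵥ binaryMonomials x y n = 0 →
      ∃ c : Fin n → A, (∀ b, c b ∈ N) ∧ c ᵥ* hilbertBurch x y n = h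
  | 0, h, _, h0 => by
    refine ⟨0, finZeroElim, ?_⟩
    ext a
    fin_cases a
    simpa [binaryMonomials, dotProduct] using h0.symm
  | n + 1, h, hh, h0 => by
    have hrec : vecHead h * y ^ (n + 1) + x * (vecTail h ⬝ᵥ binaryMonomials x y n) = 0 := by
      rwa [binaryMonomials_succ, dotProduct_cons, dotProduct_smul, smul_eq_mul] at h0
    obtain ⟨b, hb⟩ : x ∣ vecHead h := by
      have : x ∣ vecHead h * y ^ (n + 1) :=
        (dvd_add_left (dvd_mul_right ..)).1 (hrec ▸ dvd_zero x)
      exact (hx.dvd_or_dvd this).resolve_right fun hdvd ↦ hxy (hx.dvd_of_dvd_pow hdvd)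
    have hbN : b ∈ N := hM b (hb ▸ hh 0)
    have htail : (Pi.single 0 (b * y) + vecTail h) ⬝ᵥ binaryMonomials x y n = 0 := by
      refine mul_left_cancel₀ hx.ne_zero ?_
      rw [add_dotProduct, single_dotProduct, binaryMonomials]
      rw [hb] at hrec
      simp only [Fin.val_zero, pow_zero, one_mul, Nat.sub_zero]
      linear_combination hrec
    have htailM : ∀ a, (Pi.single 0 (b * y) + vecTail h : Fin (n + 1) → A) a ∈ M := fun a ↦ by
      refine add_mem ?_ (hh _)
      rw [Pi.single_apply]
      split_ifs
      exacts [hy b hbN, zero_mem M]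
    obtain ⟨c, hcN, hc⟩ := exists_vecMul_hilbertBurch_eq hx hxy hy hM htailM htail
    refine ⟨vecCons (-b) c, Fin.cases (neg_mem hbN) hcN, ?_⟩
    rw [vecCons_vecMul_hilbertBurch, hc, neg_mul, neg_neg, mul_comm, ← hb, neg_mul, Pi.single_neg,
        neg_add_cancel_left, cons_head_tail]

end HilbertBurch

theorem pow_idealOfVars_fin_two {R : Type*} [CommRing R] (n : ℕ) :
    idealOfVars (Fin 2) R ^ n = Ideal.span (Set.range (binaryMonomials (X 0) (X 1) n)) := by
  rw [pow_idealOfVars_eq_span]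
  refine le_antisymm (Ideal.span_mono ?_) (Ideal.span_le.2 ?_)
  · rintro _ ⟨d, hd, rfl⟩
    have hd : d 0 + d 1 = n := by simpa [Finsupp.degree_eq_sum] using hd
    refine ⟨⟨d 0, by omega⟩, ?_⟩
    simp [binaryMonomials, monomial_eq, Finsupp.prod_fintype, ← hd]
  · rintro _ ⟨a, rfl⟩
    rw [← pow_idealOfVars_eq_span]
    have hmem := mem_pow_idealOfVars_of_isHomogeneous
      ((isHomogeneous_X_pow (R := R) (0 : Fin 2) a).mul (isHomogeneous_X_pow 1 (n - a)))
    rwa [Nat.add_sub_of_le (Nat.le_of_lt_succ a.is_lt)] at hmem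

section HyperplaneRestriction

variable {n : ℕ}

/-- The substitution of `g` for the `i`-th variable, the other variables being renumbered. -/
noncomputable def eliminate {R : Type*} [CommRing R] (i : Fin (n + 1))
    (g : MvPolynomial (Fin n) R) : MvPolynomial (Fin (n + 1)) R →ₐ[R] MvPolynomial (Fin n) R :=
  aeval (i.insertNth g X)

section Eliminate

variable {R : Type*} [CommRing R] (i : Fin (n + 1)) (g : MvPolynomial (Fin n) R)

theorem eliminate_X_self : eliminate i g (X i) = g := by
  simp [eliminate]

theorem eliminate_X_succAbove (j : Fin n) : eliminate i g (X (i.succAbove j)) = X j := by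
  simp [eliminate]

theorem eliminate_rename_succAbove (u : MvPolynomial (Fin n) R) :
    eliminate i g (rename i.succAbove u) = u := by
  have h : (eliminate i g).comp (rename i.succAbove) = AlgHom.id R _ := by
    ext j : 1
    simp [eliminate_X_succAbove]
  exact DFunLike.congr_fun h u

theorem eliminate_surjective : Function.Surjective (eliminate i g) :=
  fun u ↦ ⟨_, eliminate_rename_succAbove i g u⟩

theorem sub_rename_eliminate_mem (u : MvPolynomial (Fin (n + 1)) R) :
    u - rename i.succAbove (eliminate i g u) ∈ Ideal.span {X i - rename i.succAbove g} := by
  let mk := Ideal.Quotient.mkₐ R (Ideal.span {X i - rename i.succAbove g})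
  have h : mk = mk.comp ((rename i.succAbove).comp (eliminate i g)) := by
    ext j : 1
    refine (Ideal.Quotient.mk_eq_mk_iff_sub_mem _ _).2 ?_
    change X j - rename i.succAbove (eliminate i g (X j)) ∈ _
    refine i.succAboveCases ?_ (fun j ↦ ?_) j
    · rw [eliminate_X_self]
      exact Ideal.mem_span_singleton_self _
    · simp [eliminate_X_succAbove]
  exact (Ideal.Quotient.mk_eq_mk_iff_sub_mem _ _).1 (DFunLike.congr_fun h u)

theorem ker_eliminate : RingHom.ker (eliminate i g) = Ideal.span {X i - rename i.succAbove g} := by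
  refine le_antisymm (fun u hu ↦ ?_) ?_
  · simpa [(RingHom.mem_ker).1 hu] using sub_rename_eliminate_mem i g u
  · rw [Ideal.span_singleton_le_iff_mem, RingHom.mem_ker, map_sub, eliminate_X_self,
      eliminate_rename_succAbove, sub_self]

variable {g} in
theorem map_eliminate_idealOfVars (hg : g ∈ idealOfVars (Fin n) R) :
    (idealOfVars (Fin (n + 1)) R).map (eliminate i g) = idealOfVars (Fin n) R := by
  refine le_antisymm ?_ (Ideal.span_le.2 ?_)
  · rw [Ideal.map_span, Ideal.span_le]
    rintro _ ⟨_, ⟨j, rfl⟩, rfl⟩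
    refine i.succAboveCases ?_ (fun j ↦ ?_) j
    · rwa [eliminate_X_self]
    · rw [eliminate_X_succAbove]
      exact Ideal.subset_span ⟨j, rfl⟩
  · rintro _ ⟨j, rfl⟩
    rw [← eliminate_X_succAbove i g]
    exact Ideal.mem_map_of_mem _ (Ideal.subset_span ⟨_, rfl⟩)

end Eliminate

/-- `π` restricts polynomials to the hyperplane `L = 0`, in some system of linear coordinates on
that hyperplane. -/
structure IsHyperplaneRestriction {σ τ R : Type*} [CommRing R] (L : MvPolynomial σ R)
    (π : MvPolynomial σ R →+* MvPolynomial τ R) : Prop where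
  surjective : Function.Surjective π
  ker_eq : RingHom.ker π = Ideal.span {L}
  map_idealOfVars : (idealOfVars σ R).map π = idealOfVars τ R

theorem IsHyperplaneRestriction.map_eq_zero {σ τ R : Type*} [CommRing R] {L : MvPolynomial σ R}
    {π : MvPolynomial σ R →+* MvPolynomial τ R} (hπ : IsHyperplaneRestriction L π) : π L = 0 := by
  rw [← RingHom.mem_ker, hπ.ker_eq]
  exact Ideal.mem_span_singleton_self L

theorem IsHyperplaneRestriction.exists_map_eq_X {σ τ R : Type*} [CommRing R] {L : MvPolynomial σ R}
    {π : MvPolynomial σ R →+* MvPolynomial τ R} (hπ : IsHyperplaneRestriction L π) (i : τ) :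
    ∃ x ∈ idealOfVars σ R, π x = X i :=
  (Ideal.mem_map_iff_of_surjective π hπ.surjective).1
    (hπ.map_idealOfVars ▸ Ideal.subset_span ⟨i, rfl⟩)

theorem isHomogeneous_one_iff_exists_eq_sum {σ R : Type*} [Fintype σ] [CommSemiring R]
    {L : MvPolynomial σ R} : L.IsHomogeneous 1 ↔ ∃ c : σ → R, L = ∑ i, C (c i) * X i := by
  rw [← mem_homogeneousSubmodule, homogeneousSubmodule_one_eq_span_X,
    Submodule.mem_span_range_iff_exists_fun]
  simp only [smul_eq_C_mul, eq_comm]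

theorem exists_isHyperplaneRestriction {k : Type*} [Field k] {L : MvPolynomial (Fin (n + 1)) k}
    (hL : L.IsHomogeneous 1) (hL0 : L ≠ 0) :
    ∃ π : MvPolynomial (Fin (n + 1)) k →+* MvPolynomial (Fin n) k,
      IsHyperplaneRestriction L π := by
  obtain ⟨c, rfl⟩ := isHomogeneous_one_iff_exists_eq_sum.1 hL
  obtain ⟨i, hi⟩ : ∃ i, c i ≠ 0 := by
    contrapose! hL0
    simp [hL0]
  let ℓ : MvPolynomial (Fin n) k := ∑ j, C (c (i.succAbove j)) * X j
  have hℓ : ℓ ∈ idealOfVars (Fin n) k :=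
    sum_mem fun j _ ↦ Ideal.mul_mem_left _ _ (Ideal.subset_span ⟨j, rfl⟩)
  let g := -C (c i)⁻¹ * ℓ
  refine ⟨eliminate i g, eliminate_surjective i g, ?_,
    map_eliminate_idealOfVars i (Ideal.mul_mem_left _ _ hℓ)⟩
  have hsum : ∑ j, C (c j) * X j = C (c i) * (X i - rename i.succAbove g) := by
    have hcc : C (c i) * C (c i)⁻¹ = (1 : MvPolynomial (Fin (n + 1)) k) := by
      rw [← C_mul, mul_inv_cancel₀ hi, C_1]
    simp only [g, ℓ, Fin.sum_univ_succAbove _ i, map_mul, map_neg, map_sum, rename_C, rename_X]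
    linear_combination -(∑ j, C (c (i.succAbove j)) * X (i.succAbove j)) * hcc
  rw [hsum, Ideal.span_singleton_mul_left_unit ((isUnit_iff_ne_zero.2 hi).map C)]
  exact ker_eliminate i g

end HyperplaneRestriction

section SupIdeal

variable {A : Type*} [CommRing A] {N : Ideal A}

theorem le_sup_iff_map_mk_le {I J : Ideal A} :
    I ≤ J ⊔ N ↔ I.map (Ideal.Quotient.mk N) ≤ J.map (Ideal.Quotient.mk N) := by
  rw [Ideal.map_le_iff_le_comap, Ideal.comap_map_of_surjective' _ Ideal.Quotient.mk_surjective,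
    Ideal.mk_ker]

theorem mul_le_mul_sup {I I' J J' : Ideal A} (h : I ≤ J ⊔ N) (h' : I' ≤ J' ⊔ N) :
    I * I' ≤ J * J' ⊔ N := by
  rw [le_sup_iff_map_mk_le, Ideal.map_mul, Ideal.map_mul] at *
  exact Ideal.mul_mono h h'

end SupIdeal

section IsHyperplaneRestriction

variable {σ R : Type*} [CommRing R] {L : MvPolynomial σ R} {n : ℕ} {I : Ideal (MvPolynomial σ R)}

theorem IsHyperplaneRestriction.map_eq_pow {τ : Type*} {π : MvPolynomial σ R →+* MvPolynomial τ R}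
    (hπ : IsHyperplaneRestriction L π) (hI : I ≤ idealOfVars σ R ^ n)
    (hn : idealOfVars σ R ^ n ≤ I ⊔ Ideal.span {L}) : I.map π = idealOfVars τ R ^ n := by
  rw [← hπ.map_idealOfVars, ← Ideal.map_pow]
  refine le_antisymm (Ideal.map_mono hI) ?_
  rw [Ideal.map_le_iff_le_comap, Ideal.comap_map_of_surjective' π hπ.surjective, hπ.ker_eq]
  exact hn

theorem IsHyperplaneRestriction.exists_comp_eq_binaryMonomials
    {π : MvPolynomial σ R →+* MvPolynomial (Fin 2) R} (hπ : IsHyperplaneRestriction L π)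
    (hI : I ≤ idealOfVars σ R ^ n) (hn : idealOfVars σ R ^ n ≤ I ⊔ Ideal.span {L}) :
    ∃ g : Fin (n + 1) → MvPolynomial σ R, (∀ a, g a ∈ I) ∧
      π ∘ g = binaryMonomials (X 0) (X 1) n ∧
      I ≤ Ideal.span (Set.range g) ⊔ (Ideal.span {L} ⊓ I) := by
  have hmap : I.map π = Ideal.span (Set.range (binaryMonomials (X 0) (X 1) n)) := by
    rw [hπ.map_eq_pow hI hn, pow_idealOfVars_fin_two]
  have hmem : ∀ a, ∃ u ∈ I, π u = binaryMonomials (X 0) (X 1) n a := fun a ↦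
    (Ideal.mem_map_iff_of_surjective π hπ.surjective).1 (hmap ▸ Ideal.subset_span ⟨a, rfl⟩)
  choose g hgI hg using hmem
  refine ⟨g, hgI, funext hg, ?_⟩
  have hgI' : Ideal.span (Set.range g) ≤ I := Ideal.span_le.2 (Set.range_subset_iff.2 hgI)
  rw [← sup_inf_assoc_of_le _ hgI', ← hπ.ker_eq, ← Ideal.comap_map_of_surjective' π hπ.surjective,
    Ideal.map_span, ← Set.range_comp, show ⇑π ∘ g = _ from funext hg, ← hmap]
  exact le_inf Ideal.le_comap_map le_rfl

end IsHyperplaneRestriction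

/-- `K` is generated by forms of degree `n`, contains all forms of degree at least `n` modulo `L`,
and `L` is a nonzerodivisor modulo `K` in degrees at least `n`. For a linear form `L` this is the
ideal-theoretic content of "`K` is generated in degree `n` and `n`-regular". -/
structure RegularAlong {σ R : Type*} [CommRing R] (L : MvPolynomial σ R) (n : ℕ)
    (K : Ideal (MvPolynomial σ R)) : Prop where
  generatedInDegree : GeneratedInDegree n K
  pow_le_sup : idealOfVars σ R ^ n ≤ K ⊔ Ideal.span {L}
  mem_of_mul_mem : ∀ u ∈ idealOfVars σ R ^ n, L * u ∈ K → u ∈ K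

section RegularAlong

variable {σ R : Type*} [CommRing R] {L : MvPolynomial σ R} {m n : ℕ}
  {I K : Ideal (MvPolynomial σ R)}

theorem regularAlong_top : RegularAlong L 0 ⊤ where
  generatedInDegree := generatedInDegree_top
  pow_le_sup := by simp
  mem_of_mul_mem _ _ _ := Submodule.mem_top

theorem RegularAlong.mem_of_pow_mul_mem (hK : RegularAlong L n K) {u : MvPolynomial σ R}
    (hu : u ∈ idealOfVars σ R ^ n) : ∀ {N : ℕ}, L ^ N * u ∈ K → u ∈ K
  | 0, h => by simpa using h
  | N + 1, h => by
    rw [pow_succ', mul_assoc] at h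
    exact hK.mem_of_pow_mul_mem hu (hK.mem_of_mul_mem _ (Ideal.mul_mem_left _ _ hu) h)

variable [NoZeroDivisors R] (hL : L.IsHomogeneous 1) (hL0 : L ≠ 0)
include hL hL0

theorem RegularAlong.mul_inf_span_le (hK : RegularAlong L n K) :
    idealOfVars σ R * K ⊓ Ideal.span {L} ≤ Ideal.span {L} * K := by
  rintro f ⟨hf, hfL⟩
  obtain ⟨u, rfl⟩ := Ideal.mem_span_singleton.1 hfL
  have hu : L * u ∈ idealOfVars σ R ^ (1 + n) := by
    rw [pow_add, pow_one]
    exact Ideal.mul_mono_right hK.generatedInDegree.le_pow hf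
  exact Ideal.mul_mem_mul (Ideal.mem_span_singleton_self L) (hK.mem_of_mul_mem u
    (mem_pow_idealOfVars_of_mul_mem hL hL0 hu) (Ideal.mul_le_right hf))

theorem RegularAlong.exists_eq_smul_of_map_eq_zero {τ ι : Type*}
    {π : MvPolynomial σ R →+* MvPolynomial τ R} (hπ : IsHyperplaneRestriction L π)
    (hK : RegularAlong L n K) {h : ι → MvPolynomial σ R} (hh : ∀ a, h a ∈ idealOfVars σ R * K)
    (h0 : ∀ a, π (h a) = 0) :
    ∃ v : ι → MvPolynomial σ R, (∀ a, v a ∈ K) ∧ h = L • v := by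
  have hmem : ∀ a, h a ∈ Ideal.span {L} * K := fun a ↦
    hK.mul_inf_span_le hL hL0 ⟨hh a, hπ.ker_eq ▸ h0 a⟩
  simp only [Ideal.mem_span_singleton_mul] at hmem
  choose v hvK hv using hmem
  exact ⟨v, hvK, funext fun a ↦ (hv a).symm⟩

theorem RegularAlong.idealOfVars_mul_mul_le (hI : RegularAlong L m I)
    {G : Ideal (MvPolynomial σ R)} (hG : I ≤ G ⊔ (Ideal.span {L} ⊓ I)) :
    idealOfVars σ R * (I * K) ≤ (idealOfVars σ R * K) * G ⊔ Ideal.span {L} * (I * K) := by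
  have hinf : idealOfVars σ R * (Ideal.span {L} ⊓ I) ≤ Ideal.span {L} * I :=
    (le_inf (Ideal.mul_mono_right inf_le_right) (Ideal.mul_le_right.trans inf_le_left)).trans
      (hI.mul_inf_span_le hL hL0)
  calc idealOfVars σ R * (I * K)
      ≤ idealOfVars σ R * ((G ⊔ (Ideal.span {L} ⊓ I)) * K) :=
        Ideal.mul_mono_right (Ideal.mul_mono_left hG)
    _ = (idealOfVars σ R * K) * G ⊔ (idealOfVars σ R * (Ideal.span {L} ⊓ I)) * K := by
        rw [Ideal.sup_mul, Ideal.mul_sup, mul_comm G, mul_assoc, mul_assoc]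
    _ ≤ (idealOfVars σ R * K) * G ⊔ Ideal.span {L} * (I * K) := by
        rw [← mul_assoc (Ideal.span {L})]
        exact sup_le_sup_left (Ideal.mul_mono_left hinf) _

end RegularAlong

section Product

open Matrix

theorem exists_dotProduct_add_mul_eq {A : Type*} [CommRing A] {ι : Type*} [Fintype ι] {g : ι → A}
    {I J : Ideal A} {a f : A} (hf : f ∈ J * Ideal.span (Set.range g) ⊔ Ideal.span {a} * I) :
    ∃ h : ι → A, ∃ q ∈ I, (∀ i, h i ∈ J) ∧ f = h ⬝ᵥ g + a * q := by
  obtain ⟨_, hu, _, hv, rfl⟩ := Submodule.mem_sup.1 hf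
  obtain ⟨c, hc, rfl⟩ := (Submodule.mem_ideal_smul_span_iff_exists_sum J g _).1 hu
  obtain ⟨q, hq, rfl⟩ := Ideal.mem_span_singleton_mul.1 hv
  refine ⟨c, q, hq, hc, ?_⟩
  rw [Finsupp.sum_fintype _ _ (by simp)]
  rfl

variable {R : Type*} [CommRing R] [IsDomain R] {σ : Type*} {L : MvPolynomial σ R}
  (hL : L.IsHomogeneous 1) (hL0 : L ≠ 0) {π : MvPolynomial σ R →+* MvPolynomial (Fin 2) R}
  (hπ : IsHyperplaneRestriction L π) {x y : MvPolynomial σ R} (hx : x ∈ idealOfVars σ R)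
  (hy : y ∈ idealOfVars σ R) (hπx : π x = X 0) (hπy : π y = X 1) {m n : ℕ}
  {I K : Ideal (MvPolynomial σ R)}
include hL hL0 hπ hx hy hπx hπy

theorem RegularAlong.exists_hilbertBurch_mulVec_eq (hI : RegularAlong L m I)
    {g : Fin (m + 1) → MvPolynomial σ R} (hgI : ∀ a, g a ∈ I)
    (hg : π ∘ g = binaryMonomials (X 0) (X 1) m) :
    ∃ v : Fin m → MvPolynomial σ R, (∀ b, v b ∈ I) ∧ hilbertBurch x y m *ᵥ g = L • v := by
  refine hI.exists_eq_smul_of_map_eq_zero hL hL0 hπ (fun b ↦ ?_) fun b ↦ ?_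
  · rw [hilbertBurch_mulVec_apply]
    exact sub_mem (Ideal.mul_mem_mul hy (hgI _)) (Ideal.mul_mem_mul hx (hgI _))
  · rw [RingHom.map_mulVec, hilbertBurch_map, hπx, hπy, hg, hilbertBurch_mulVec_binaryMonomials]
    rfl

theorem RegularAlong.exists_eq_vecMul_hilbertBurch_add (hK : RegularAlong L n K)
    {h : Fin (m + 1) → MvPolynomial σ R} (hh : ∀ a, h a ∈ idealOfVars σ R * K)
    (h0 : (π ∘ h) ⬝ᵥ binaryMonomials (X 0) (X 1) m = 0) :
    ∃ d : Fin m → MvPolynomial σ R, ∃ w : Fin (m + 1) → MvPolynomial σ R,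
      (∀ b, d b ∈ K) ∧ (∀ a, w a ∈ K) ∧ h = d ᵥ* hilbertBurch x y m + L • w := by
  have hmap : K.map π = idealOfVars (Fin 2) R ^ n :=
    hπ.map_eq_pow hK.generatedInDegree.le_pow hK.pow_le_sup
  have hπh : ∀ a, (π ∘ h) a ∈ idealOfVars (Fin 2) R ^ (1 + n) := fun a ↦ by
    rw [pow_add, pow_one, ← hmap, ← hπ.map_idealOfVars, ← Ideal.map_mul]
    exact Ideal.mem_map_of_mem π (hh a)
  obtain ⟨c, hcmem, hc⟩ := exists_vecMul_hilbertBurch_eq (X_prime (R := R)) (by simp [X_dvd_X])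
    (M := idealOfVars (Fin 2) R ^ (1 + n)) (N := idealOfVars (Fin 2) R ^ n)
    (fun b hb ↦ by
      rw [add_comm, pow_succ]
      exact Ideal.mul_mem_mul hb (Ideal.subset_span ⟨1, rfl⟩))
    (fun _ ↦ mem_pow_idealOfVars_of_mul_mem (isHomogeneous_X R _) (X_ne_zero _)) hπh h0
  have hlift : ∀ b, ∃ u ∈ K, π u = c b := fun b ↦
    (Ideal.mem_map_iff_of_surjective π hπ.surjective).1 (hmap ▸ hcmem b)
  choose d hdK hd using hlift
  have hdT : ∀ a, (d ᵥ* hilbertBurch x y m) a ∈ idealOfVars σ R * K := fun a ↦ by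
    rw [vecMul, dotProduct]
    exact sum_mem fun b _ ↦ Ideal.mul_mem_mul_rev (hilbertBurch_apply_mem hx hy b a) (hdK b)
  obtain ⟨w, hwK, hw⟩ := hK.exists_eq_smul_of_map_eq_zero hL hL0 hπ
    (h := h - d ᵥ* hilbertBurch x y m)
    (fun a ↦ sub_mem (hh a) (hdT a))
    (fun a ↦ by
      rw [Pi.sub_apply, map_sub, RingHom.map_vecMul, hilbertBurch_map, hπx, hπy,
        show ⇑π ∘ d = c from funext hd, hc]
      exact sub_self _)
  exact ⟨d, w, hdK, hwK, by rw [← hw, add_sub_cancel]⟩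

end Product

theorem RegularAlong.mul {k : Type*} [Field k] {L : MvPolynomial (Fin 3) k}
    (hL : L.IsHomogeneous 1) (hL0 : L ≠ 0) {m n : ℕ} {I K : Ideal (MvPolynomial (Fin 3) k)}
    (hI : RegularAlong L m I) (hK : RegularAlong L n K) : RegularAlong L (m + n) (I * K) where
  generatedInDegree := hI.generatedInDegree.mul hK.generatedInDegree
  pow_le_sup := by
    rw [pow_add]
    exact mul_le_mul_sup hI.pow_le_sup hK.pow_le_sup
  mem_of_mul_mem f hf hLf := by
    obtain ⟨π, hπ⟩ := exists_isHyperplaneRestriction hL hL0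
    obtain ⟨x, hx, hπx⟩ := hπ.exists_map_eq_X 0
    obtain ⟨y, hy, hπy⟩ := hπ.exists_map_eq_X 1
    obtain ⟨g, hgI, hg, hIg⟩ :=
      hπ.exists_comp_eq_binaryMonomials hI.generatedInDegree.le_pow hI.pow_le_sup
    have hLfM : L * f ∈ idealOfVars (Fin 3) k * (I * K) := by
      simpa only [pow_one] using
        (hI.generatedInDegree.mul hK.generatedInDegree).mul_mem_pow_mul hL hf hLf
    obtain ⟨h, q, hq, hh, hfq⟩ :=
      exists_dotProduct_add_mul_eq (hI.idealOfVars_mul_mul_le hL hL0 hIg hLfM)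
    have hsyz : (π ∘ h) ⬝ᵥ binaryMonomials (X 0) (X 1) m = 0 := by
      rw [← hg, ← RingHom.map_dotProduct]
      simpa [hπ.map_eq_zero] using (congrArg π hfq).symm
    obtain ⟨d, w, hd, hw, rfl⟩ :=
      hK.exists_eq_vecMul_hilbertBurch_add hL hL0 hπ hx hy hπx hπy hh hsyz
    obtain ⟨v, hv, hgv⟩ := hI.exists_hilbertBurch_mulVec_eq hL hL0 hπ hx hy hπx hπy hgI hg
    have hf' : f = d ⬝ᵥ v + w ⬝ᵥ g + q := by
      refine mul_left_cancel₀ hL0 ?_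
      rw [hfq, add_dotProduct, ← Matrix.dotProduct_mulVec, hgv, dotProduct_smul,
        smul_dotProduct, smul_eq_mul, smul_eq_mul]
      ring
    rw [hf']
    exact add_mem (add_mem (sum_mem fun b _ ↦ Ideal.mul_mem_mul_rev (hv b) (hd b))
      (sum_mem fun a _ ↦ Ideal.mul_mem_mul_rev (hgI a) (hw a))) hq

theorem RegularAlong.pow {k : Type*} [Field k] {L : MvPolynomial (Fin 3) k}
    (hL : L.IsHomogeneous 1) (hL0 : L ≠ 0) {n : ℕ} {K : Ideal (MvPolynomial (Fin 3) k)}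
    (hK : RegularAlong L n K) : ∀ r : ℕ, RegularAlong L (r * n) (K ^ r)
  | 0 => by simpa using regularAlong_top
  | r + 1 => by
    rw [add_one_mul, pow_succ]
    exact (hK.pow hL hL0 r).mul hL hL0 hK

section Truncation

attribute [local instance] gradedAlgebra

variable {σ R : Type*} [CommRing R] {L : MvPolynomial σ R} {I : Ideal (MvPolynomial σ R)} {d : ℕ}

theorem exists_add_mul_eq_of_mem_sup (hI : I.IsHomogeneous (homogeneousSubmodule σ R)) {e : ℕ}
    (hL : L.IsHomogeneous e) {p : MvPolynomial σ R} (hp : p.IsHomogeneous (e + d))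
    (hpI : p ∈ I ⊔ Ideal.span {L}) :
    ∃ v ∈ I, ∃ u : MvPolynomial σ R, v.IsHomogeneous (e + d) ∧ u.IsHomogeneous d ∧
      v + L * u = p := by
  obtain ⟨v, hv, _, hLu, hvu⟩ := Submodule.mem_sup.1 hpI
  obtain ⟨u, rfl⟩ := Ideal.mem_span_singleton.1 hLu
  refine ⟨homogeneousComponent (e + d) v, homogeneousComponent_mem_of_mem hI hv _,
    homogeneousComponent d u, homogeneousComponent_isHomogeneous _ _,
    homogeneousComponent_isHomogeneous _ _, ?_⟩
  rw [← homogeneousComponent_add_mul hL, ← map_add, hvu, homogeneousComponent_eq_self hp]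

theorem pow_le_span_forms_sup (hI : I.IsHomogeneous (homogeneousSubmodule σ R))
    (hL : L.IsHomogeneous 1) (hd : idealOfVars σ R ^ (1 + d) ≤ I ⊔ Ideal.span {L}) :
    idealOfVars σ R ^ (1 + d) ≤
      Ideal.span {v | v ∈ I ∧ v.IsHomogeneous (1 + d)} ⊔ Ideal.span {L} := by
  refine pow_idealOfVars_le_iff.2 fun p hp ↦ ?_
  obtain ⟨v, hv, u, hv', -, rfl⟩ :=
    exists_add_mul_eq_of_mem_sup hI hL hp (pow_idealOfVars_le_iff.1 hd p hp)
  exact Submodule.add_mem_sup (Ideal.subset_span ⟨hv, hv'⟩)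
    (Ideal.mul_mem_right u _ (Ideal.mem_span_singleton_self L))

theorem mem_span_forms_of_isHomogeneous (hI : I.IsHomogeneous (homogeneousSubmodule σ R))
    (hL : L.IsHomogeneous 1) (hsat : ∀ u, L * u ∈ I → u ∈ I)
    (hd : idealOfVars σ R ^ (1 + d) ≤ I ⊔ Ideal.span {L}) :
    ∀ (j : ℕ) {p : MvPolynomial σ R}, p ∈ I → p.IsHomogeneous (1 + d + j) →
      p ∈ Ideal.span {v | v ∈ I ∧ v.IsHomogeneous (1 + d)}
  | 0, _, hpI, hp => Ideal.subset_span ⟨hpI, hp⟩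
  | j + 1, p, hpI, hp => by
    have hhom : (Ideal.span {v | v ∈ I ∧ v.IsHomogeneous (1 + d)}).IsHomogeneous
        (homogeneousSubmodule σ R) := Ideal.homogeneous_span _ _ fun v hv ↦ ⟨1 + d, hv.2⟩
    rw [show 1 + d + (j + 1) = 1 + (1 + d + j) by ring] at hp
    obtain ⟨v, hv, u, -, hu, rfl⟩ := exists_add_mul_eq_of_mem_sup hhom hL hp
      (pow_le_span_forms_sup hI hL hd
        (Ideal.pow_le_pow_right (by omega) (mem_pow_idealOfVars_of_isHomogeneous hp)))
    have hvI : v ∈ I := Ideal.span_le.2 (fun _ h ↦ h.1) hv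
    have huI : u ∈ I := hsat u ((add_mem_cancel_left hvI).1 hpI)
    exact add_mem hv (Ideal.mul_mem_left _ L
      (mem_span_forms_of_isHomogeneous hI hL hsat hd j huI hu))

theorem inf_pow_eq_span_forms (hI : I.IsHomogeneous (homogeneousSubmodule σ R))
    (hL : L.IsHomogeneous 1) (hsat : ∀ u, L * u ∈ I → u ∈ I)
    (hd : idealOfVars σ R ^ (1 + d) ≤ I ⊔ Ideal.span {L}) :
    I ⊓ idealOfVars σ R ^ (1 + d) = Ideal.span {v | v ∈ I ∧ v.IsHomogeneous (1 + d)} := by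
  refine le_antisymm ?_ (Ideal.span_le.2 fun v hv ↦
    ⟨hv.1, mem_pow_idealOfVars_of_isHomogeneous hv.2⟩)
  rintro p ⟨hpI, hp⟩
  rw [← sum_homogeneousComponent p]
  refine sum_mem fun i _ ↦ ?_
  obtain hi | hi := lt_or_ge i (1 + d)
  · rw [mem_pow_idealOfVars_iff_homogeneousComponent.1 hp i hi]
    exact zero_mem _
  · obtain ⟨j, rfl⟩ := Nat.exists_eq_add_of_le hi
    exact mem_span_forms_of_isHomogeneous hI hL hsat hd j
      (homogeneousComponent_mem_of_mem hI hpI _) (homogeneousComponent_isHomogeneous _ p)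

theorem regularAlong_inf_pow (hI : I.IsHomogeneous (homogeneousSubmodule σ R))
    (hL : L.IsHomogeneous 1) (hsat : ∀ u, L * u ∈ I → u ∈ I)
    (hd : idealOfVars σ R ^ (1 + d) ≤ I ⊔ Ideal.span {L}) :
    RegularAlong L (1 + d) (I ⊓ idealOfVars σ R ^ (1 + d)) where
  generatedInDegree := ⟨_, fun _ hv ↦ hv.2, inf_pow_eq_span_forms hI hL hsat hd⟩
  pow_le_sup := by
    rw [inf_pow_eq_span_forms hI hL hsat hd]
    exact pow_le_span_forms_sup hI hL hd
  mem_of_mul_mem u hu hLu := ⟨hsat u hLu.1, hu⟩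

end Truncation

section HilbertFunction

/- Modulo `J`, the map `φ` embeds `A` into `B`, so equality of dimensions means surjectivity. -/
theorem finrank_sub_finrank_inf_eq_iff {k V W : Type*} [DivisionRing k] [AddCommGroup V]
    [Module k V] [AddCommGroup W] [Module k W] {φ : V →ₗ[k] W} (hφ : Function.Injective φ)
    {A : Submodule k V} {B J : Submodule k W} [FiniteDimensional k A] [FiniteDimensional k B]
    (hAB : A.map φ ≤ B) :
    Module.finrank k A - Module.finrank k ↥(A ⊓ J.comap φ) =
        Module.finrank k B - Module.finrank k ↥(B ⊓ J) ↔
      B ≤ A.map φ ⊔ B ⊓ J := by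
  have hmap (S : Submodule k V) : Module.finrank k (S.map φ) = Module.finrank k S :=
    (Submodule.equivMapOfInjective φ hφ S).finrank_eq.symm
  have hinf : A.map φ ⊓ (B ⊓ J) = (A ⊓ J.comap φ).map φ := by
    rw [← inf_assoc, inf_eq_left.2 hAB, Submodule.map_inf_eq_map_inf_comap]
  have hsum := Submodule.finrank_sup_add_finrank_inf_eq (A.map φ) (B ⊓ J)
  rw [hinf, hmap, hmap] at hsum
  have hle : A.map φ ⊔ B ⊓ J ≤ B := sup_le hAB inf_le_left
  have hA : Module.finrank k ↥(A ⊓ J.comap φ) ≤ Module.finrank k A :=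
    Submodule.finrank_mono inf_le_left
  have hB : Module.finrank k ↥(B ⊓ J) ≤ Module.finrank k B := Submodule.finrank_mono inf_le_left
  have heq : Module.finrank k A - Module.finrank k ↥(A ⊓ J.comap φ) =
        Module.finrank k B - Module.finrank k ↥(B ⊓ J) ↔
      Module.finrank k ↥(A.map φ ⊔ B ⊓ J) = Module.finrank k B := by omega
  rw [heq]
  exact ⟨fun h ↦ (Submodule.eq_of_le_of_finrank_eq hle h).ge, fun h ↦ by rw [le_antisymm hle h]⟩

attribute [local instance] gradedAlgebra

variable {N : ℕ} {L : MvPolynomial (Fin N) ℂ} {I : Ideal (MvPolynomial (Fin N) ℂ)}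

theorem quotientHilbert_eq_succ_iff (hI : I.IsHomogeneous (homogeneousSubmodule (Fin N) ℂ))
    (hL : L.IsHomogeneous 1) (hL0 : L ≠ 0) (hsat : ∀ u, L * u ∈ I → u ∈ I) (d : ℕ) :
    quotientHilbert I d = quotientHilbert I (d + 1) ↔
      idealOfVars (Fin N) ℂ ^ (d + 1) ≤ I ⊔ Ideal.span {L} := by
  have hfin (e : ℕ) : FiniteDimensional ℂ (homogeneousSubmodule (Fin N) ℂ e) :=
    Module.Finite.iff_fg.2 (homogeneousSubmodule_fg _ _ e)
  have hcomap : (I.restrictScalars ℂ).comap (LinearMap.mulLeft ℂ L) = I.restrictScalars ℂ :=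
    le_antisymm hsat fun u hu ↦ Ideal.mul_mem_left I L hu
  have hmul : (homogeneousSubmodule (Fin N) ℂ d).map (LinearMap.mulLeft ℂ L) ≤
      homogeneousSubmodule (Fin N) ℂ (d + 1) := by
    rintro _ ⟨u, hu, rfl⟩
    exact add_comm 1 d ▸ hL.mul hu
  have hrank := finrank_sub_finrank_inf_eq_iff (φ := LinearMap.mulLeft ℂ L)
    (mul_right_injective₀ hL0) hmul (J := I.restrictScalars ℂ)
  rw [hcomap] at hrank
  rw [quotientHilbert, quotientHilbert, hrank]
  constructor
  · refine fun h ↦ pow_idealOfVars_le_iff.2 fun p hp ↦ ?_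
    obtain ⟨_, ⟨u, -, rfl⟩, v, ⟨-, hv⟩, rfl⟩ := Submodule.mem_sup.1 (h hp)
    rw [add_comm]
    exact Submodule.add_mem_sup hv (Ideal.mul_mem_right u _ (Ideal.mem_span_singleton_self L))
  · intro h p hp
    obtain ⟨v, hv, u, hv', hu, rfl⟩ := exists_add_mul_eq_of_mem_sup hI hL (add_comm d 1 ▸ hp)
      (pow_idealOfVars_le_iff.1 h p hp)
    rw [add_comm v]
    exact Submodule.add_mem_sup ⟨u, hu, rfl⟩ ⟨add_comm 1 d ▸ hv', hv⟩

theorem pow_le_sup_of_regCM_le (hI : I.IsHomogeneous (homogeneousSubmodule (Fin N) ℂ))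
    (hL : L.IsHomogeneous 1) (hL0 : L ≠ 0) (hsat : ∀ u, L * u ∈ I → u ∈ I) {n d : ℕ}
    (hn : idealOfVars (Fin N) ℂ ^ n ≤ I ⊔ Ideal.span {L}) (hd : regCM I ≤ d + 1) :
    idealOfVars (Fin N) ℂ ^ (d + 1) ≤ I ⊔ Ideal.span {L} := by
  rw [← quotientHilbert_eq_succ_iff hI hL hL0 hsat]
  have hstable : n ∈ {t | ∀ d, t ≤ d + 1 → quotientHilbert I d = quotientHilbert I (d + 1)} :=
    fun d hd ↦ (quotientHilbert_eq_succ_iff hI hL hL0 hsat d).2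
      ((Ideal.pow_le_pow_right hd).trans hn)
  exact Nat.sInf_mem ⟨n, hstable⟩ d hd

end HilbertFunction

section ProductOfIdeals

variable {A ι : Type*} [CommRing A] {L : A}

theorem mem_radical_sup_prod {I : Ideal A} {s : Finset ι} {Q : ι → Ideal A}
    (h : ∀ i ∈ s, L ∈ (I ⊔ Q i).radical) : L ∈ (I ⊔ ∏ i ∈ s, Q i).radical := by
  rw [Ideal.radical_eq_sInf, Submodule.mem_sInf]
  rintro 𝔭 ⟨hle, h𝔭⟩
  obtain ⟨i, hi, hQi⟩ := h𝔭.prod_le.1 (le_sup_right.trans hle)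
  exact h𝔭.radical_le_iff.2 (sup_le (le_sup_left.trans hle) hQi) (h i hi)

theorem exists_pow_mul_mem_prod {Q : ι → Ideal A}
    (hQ : Pairwise fun i j ↦ L ∈ (Q i ⊔ Q j).radical) (s : Finset ι) :
    ∃ N : ℕ, ∀ f, (∀ i ∈ s, f ∈ Q i) → L ^ N * f ∈ ∏ i ∈ s, Q i := by
  classical
  induction s using Finset.induction_on with
  | empty => exact ⟨0, by simp⟩
  | insert i s hi ih =>
    obtain ⟨N, hN⟩ := ih
    obtain ⟨n, hn⟩ := mem_radical_sup_prod (s := s) fun j hj ↦ hQ (ne_of_mem_of_not_mem hj hi).symm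
    obtain ⟨x, hx, y, hy, hxy⟩ := Submodule.mem_sup.1 hn
    refine ⟨n + N, fun f hf ↦ ?_⟩
    have hfi : L ^ N * f ∈ Q i := Ideal.mul_mem_left _ _ (hf i (Finset.mem_insert_self i s))
    have hfs : L ^ N * f ∈ ∏ j ∈ s, Q j := hN f fun j hj ↦ hf j (Finset.mem_insert_of_mem hj)
    rw [Finset.prod_insert hi, pow_add, mul_assoc, ← hxy, add_mul]
    exact add_mem (Ideal.mul_mem_mul hx hfs) (Ideal.mul_mem_mul_rev hfi hy)

variable {Q : ι → Ideal A}

theorem prod_pow_le_iInf_pow [Fintype ι] (m : ι → ℕ) : ∏ i, Q i ^ m i ≤ ⨅ i, Q i ^ m i := by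
  rw [← Finset.inf_univ_eq_iInf]
  exact Ideal.prod_le_inf

theorem pow_sum_le_iInf_pow_sup [Fintype ι] {M N : Ideal A} (hQ : ∀ i, M ≤ Q i ⊔ N)
    (m : ι → ℕ) : M ^ ∑ i, m i ≤ (⨅ i, Q i ^ m i) ⊔ N := by
  refine le_trans ?_ (sup_le_sup_right (prod_pow_le_iInf_pow m) N)
  simp only [← Finset.prod_pow_eq_pow_sum, le_sup_iff_map_mk_le, ← Ideal.mapHom_apply, map_prod,
    map_pow] at hQ ⊢
  exact Finset.prod_le_prod' fun i _ ↦ Ideal.pow_right_mono (hQ i) (m i)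

theorem exists_pow_mul_mem_iInf_pow_pow [Finite ι] (hQ : Pairwise fun i j ↦ L ∈ Q i ⊔ Q j)
    (m : ι → ℕ) {q r : ℕ} (hrq : r ≤ q) :
    ∃ N : ℕ, ∀ f ∈ ⨅ i, Q i ^ (q * m i), L ^ N * f ∈ (⨅ i, Q i ^ m i) ^ r := by
  have := Fintype.ofFinite ι
  have hrad : Pairwise fun i j ↦ L ∈ (Q i ^ (r * m i) ⊔ Q j ^ (r * m j)).radical := fun i j hij ↦
    ⟨_, Ideal.sup_pow_add_le_pow_sup_pow (Ideal.pow_mem_pow (hQ hij) _)⟩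
  obtain ⟨N, hN⟩ := exists_pow_mul_mem_prod hrad Finset.univ
  refine ⟨N, fun f hf ↦ Ideal.pow_right_mono (prod_pow_le_iInf_pow m) r ?_⟩
  simp only [← Finset.prod_pow, ← pow_mul, mul_comm _ r]
  exact hN f fun i _ ↦
    Ideal.pow_le_pow_right (Nat.mul_le_mul_right _ hrq) ((Submodule.mem_iInf _).1 hf i)

end ProductOfIdeals

section RestrictLine

variable {σ k : Type*} [Field k] {L : MvPolynomial σ k} {p : σ → k}

/-- `restrictLine L p f` is the polynomial `f` along the line through the generic point `x` in the
direction `p`, written in the coordinate `T = L` of that line: `f (x + ((T - L x) / L p) • p)`.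
Unless `L p = 0`, it sends `L` to `T` and fixes every linear form vanishing at `p`. -/
noncomputable def restrictLine (L : MvPolynomial σ k) (p : σ → k) :
    MvPolynomial σ k →ₐ[k] Polynomial (MvPolynomial σ k) :=
  aeval fun j ↦ Polynomial.C (X j) +
    Polynomial.C (C (p j / eval p L)) * (Polynomial.X - Polynomial.C L)

theorem eval_restrictLine (f : MvPolynomial σ k) : (restrictLine L p f).eval L = f := by
  have h : ((Polynomial.evalRingHom L).comp (restrictLine L p : _ →+* _)) =
      RingHom.id (MvPolynomial σ k) := by
    ext <;> simp [restrictLine]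
  exact DFunLike.congr_fun h f

theorem restrictLine_of_isHomogeneous_one {f : MvPolynomial σ k} (hf : f.IsHomogeneous 1) :
    restrictLine L p f = Polynomial.C f +
      Polynomial.C (C (eval p f / eval p L)) * (Polynomial.X - Polynomial.C L) := by
  rw [← mem_homogeneousSubmodule, homogeneousSubmodule_one_eq_span_X] at hf
  induction hf using Submodule.span_induction with
  | mem _ h =>
    obtain ⟨j, rfl⟩ := h
    simp [restrictLine]
  | zero => simp
  | add f g _ _ hf hg =>
    simp only [map_add, hf, hg, add_div]
    ring
  | smul c f _ hf =>
    simp only [smul_eq_C_mul, map_mul, hf, eval_C, algHom_C, Polynomial.algebraMap_apply,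
      algebraMap_eq, mul_div_assoc]
    ring

theorem restrictLine_self (hL : L.IsHomogeneous 1) (hp : eval p L ≠ 0) :
    restrictLine L p L = Polynomial.X := by
  simp [restrictLine_of_isHomogeneous_one hL, hp]

end RestrictLine

section PointIdeal

variable {p : Fin 3 → ℂ} {L : MvPolynomial (Fin 3) ℂ}

theorem pointIdeal_le_idealOfVars (p : Fin 3 → ℂ) : pointIdeal p ≤ idealOfVars (Fin 3) ℂ :=
  Ideal.span_le.2 fun _ hf ↦ pow_one (idealOfVars (Fin 3) ℂ) ▸
    mem_pow_idealOfVars_of_isHomogeneous hf.1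

theorem sub_mul_mem_pointIdeal (hL : L.IsHomogeneous 1) (hp : eval p L ≠ 0)
    {f : MvPolynomial (Fin 3) ℂ} (hf : f.IsHomogeneous 1) :
    f - C (eval p f / eval p L) * L ∈ pointIdeal p := by
  refine Ideal.subset_span ⟨hf.sub ?_, ?_⟩
  · simpa using (isHomogeneous_C (Fin 3) (eval p f / eval p L)).mul hL
  · simp [hp]

theorem idealOfVars_le_pointIdeal_sup (hL : L.IsHomogeneous 1) (hp : eval p L ≠ 0) :
    idealOfVars (Fin 3) ℂ ≤ pointIdeal p ⊔ Ideal.span {L} := by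
  refine Ideal.span_le.2 ?_
  rintro _ ⟨j, rfl⟩
  have hX := Submodule.add_mem_sup (sub_mul_mem_pointIdeal hL hp (isHomogeneous_X ℂ j))
    (Ideal.mul_mem_left (Ideal.span {L}) (C (eval p (X j) / eval p L))
      (Ideal.mem_span_singleton_self L))
  rwa [sub_add_cancel] at hX

theorem idealOfVars_le_pointIdeal_sup_pointIdeal {q : Fin 3 → ℂ} (hp : p ≠ 0)
    (hpq : ∀ c : ℂ, c • p ≠ q) : idealOfVars (Fin 3) ℂ ≤ pointIdeal p ⊔ pointIdeal q := by
  obtain ⟨a, ha⟩ : ∃ a, p a ≠ 0 := Function.ne_iff.1 hp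
  obtain ⟨b, hb⟩ : ∃ b, p a * q b - p b * q a ≠ 0 := by
    contrapose! hpq
    refine ⟨q a / p a, funext fun b ↦ ?_⟩
    rw [Pi.smul_apply, smul_eq_mul, div_mul_eq_mul_div, div_eq_iff ha]
    linear_combination -hpq b
  have hhom : (C (p a) * X b - C (p b) * X a : MvPolynomial (Fin 3) ℂ).IsHomogeneous 1 :=
    (isHomogeneous_C_mul_X _ _).sub (isHomogeneous_C_mul_X _ _)
  have hmem : C (p a) * X b - C (p b) * X a ∈ pointIdeal p :=
    Ideal.subset_span ⟨hhom, by simp [mul_comm]⟩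
  have hq : eval q (C (p a) * X b - C (p b) * X a) ≠ 0 := by simpa using hb
  exact (idealOfVars_le_pointIdeal_sup hhom hq).trans
    (sup_le le_sup_right (((Ideal.span_singleton_le_iff_mem _).2 hmem).trans le_sup_left))

theorem map_restrictLine_pointIdeal_le (p : Fin 3 → ℂ) (L : MvPolynomial (Fin 3) ℂ) :
    (pointIdeal p).map (restrictLine L p) ≤ (pointIdeal p).map Polynomial.C := by
  rw [Ideal.map_le_iff_le_comap]
  refine Ideal.span_le.2 fun f hf ↦ ?_
  have hf' : restrictLine L p f = Polynomial.C f := by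
    simp [restrictLine_of_isHomogeneous_one hf.1, hf.2]
  rw [SetLike.mem_coe, Ideal.mem_comap, hf']
  exact Ideal.mem_map_of_mem _ (Ideal.subset_span hf)

/- In the coordinate `T = L` along the lines through `p`, the ideal of `p` is generated by
constants, so multiplication by `L` only shifts coefficients. -/
theorem mem_pointIdeal_pow_of_mul_mem (hL : L.IsHomogeneous 1) (hp : eval p L ≠ 0) {a : ℕ}
    {u : MvPolynomial (Fin 3) ℂ} (hu : L * u ∈ pointIdeal p ^ a) : u ∈ pointIdeal p ^ a := by
  have hmap : restrictLine L p (L * u) ∈ (pointIdeal p ^ a).map Polynomial.C := by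
    rw [Ideal.map_pow]
    refine Ideal.pow_right_mono (map_restrictLine_pointIdeal_le p L) a ?_
    rw [← Ideal.map_pow]
    exact Ideal.mem_map_of_mem _ hu
  have hcoeff (n : ℕ) : (restrictLine L p u).coeff n ∈ pointIdeal p ^ a := by
    simpa [restrictLine_self hL hp] using Ideal.mem_map_C_iff.1 hmap (n + 1)
  rw [← eval_restrictLine (L := L) (p := p) u, Polynomial.eval_eq_sum]
  exact sum_mem fun n _ ↦ Ideal.mul_mem_right _ _ (hcoeff n)

end PointIdeal

theorem exists_isHomogeneous_one_forall_eval_ne_zero {σ ι k : Type*} [Finite σ] [Nonempty σ]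
    [Finite ι] [Field k] [Infinite k] {P : ι → σ → k} (hP : ∀ i, P i ≠ 0) :
    ∃ L : MvPolynomial σ k, L.IsHomogeneous 1 ∧ L ≠ 0 ∧ ∀ i, eval (P i) L ≠ 0 := by
  classical
  have := Fintype.ofFinite σ
  obtain ⟨φ, hφ⟩ := Module.exists_dual_forall_apply_ne_zero (K := k)
    (fun o : Option ι ↦ o.elim 1 P) (Option.rec one_ne_zero hP)
  let L : MvPolynomial σ k := ∑ j, C (φ fun i ↦ if j = i then 1 else 0) * X j
  have heval (p : σ → k) : eval p L = φ p := by
    simp [L, LinearMap.pi_apply_eq_sum_univ φ p, mul_comm]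
  refine ⟨L, isHomogeneous_one_iff_exists_eq_sum.2 ⟨_, rfl⟩, ?_, fun i ↦ heval (P i) ▸ hφ (some i)⟩
  intro h0
  exact hφ none (by simpa [h0] using (heval 1).symm)

section InitialDegree

attribute [local instance] gradedAlgebra

variable {N n : ℕ} {J : Ideal (MvPolynomial (Fin N) ℂ)}

theorem le_pow_idealOfVars_of_le_initialDegree
    (hJ : J.IsHomogeneous (homogeneousSubmodule (Fin N) ℂ)) (hn : n ≤ initialDegree J) :
    J ≤ idealOfVars (Fin N) ℂ ^ n := by
  intro f hf
  rw [mem_pow_idealOfVars_iff_homogeneousComponent]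
  intro i hi
  by_contra h0
  refine hi.not_ge (hn.trans (Nat.sInf_le ⟨_, homogeneousComponent_mem_of_mem hJ hf i, h0, ?_⟩))
  exact (homogeneousComponent_isHomogeneous i f).totalDegree h0

theorem le_initialDegree_of_le_pow_idealOfVars (hJ : J ≤ idealOfVars (Fin N) ℂ ^ n)
    (h0 : 0 < initialDegree J) : n ≤ initialDegree J := by
  obtain ⟨f, hf, hf0, hdeg⟩ := Nat.sInf_mem (Nat.nonempty_of_pos_sInf h0)
  obtain ⟨x, hx⟩ := ne_zero_iff.1 hf0
  have hnx : n ≤ x.degree := by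
    contrapose! hx
    exact (mem_pow_idealOfVars_iff' n f).1 (hJ hf) x hx
  exact hnx.trans ((le_totalDegree (mem_support_iff.2 hx)).trans hdeg.le)

theorem le_initialDegree_iInf_pointIdeal_pow {ι : Type*} {P : ι → Fin 3 → ℂ} {m : ι → ℕ} (i : ι)
    (h0 : 0 < initialDegree (⨅ i, pointIdeal (P i) ^ m i)) :
    m i ≤ initialDegree (⨅ i, pointIdeal (P i) ^ m i) :=
  le_initialDegree_of_le_pow_idealOfVars
    ((iInf_le _ i).trans (Ideal.pow_right_mono (pointIdeal_le_idealOfVars (P i)) _)) h0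

theorem isHomogeneous_iInf_pointIdeal_pow {ι : Type*} (P : ι → Fin 3 → ℂ) (m : ι → ℕ) :
    (⨅ i, pointIdeal (P i) ^ m i).IsHomogeneous (homogeneousSubmodule (Fin 3) ℂ) := by
  refine Ideal.IsHomogeneous.iInf fun i ↦ ?_
  induction m i with
  | zero =>
    rw [pow_zero, Ideal.one_eq_top]
    exact Ideal.IsHomogeneous.top _
  | succ a ih =>
    rw [pow_succ]
    exact ih.mul (Ideal.homogeneous_span _ _ fun f hf ↦ ⟨1, hf.1⟩)

end InitialDegree

theorem regularAlong_iInf_pointIdeal_pow {ι : Type*} [Finite ι] {P : ι → Fin 3 → ℂ}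
    {L : MvPolynomial (Fin 3) ℂ} (hL : L.IsHomogeneous 1) (hL0 : L ≠ 0)
    (hP : ∀ i, eval (P i) L ≠ 0) (m : ι → ℕ) {d : ℕ}
    (hd : regCM (⨅ i, pointIdeal (P i) ^ m i) ≤ d + 1) :
    RegularAlong L (d + 1)
      ((⨅ i, pointIdeal (P i) ^ m i) ⊓ idealOfVars (Fin 3) ℂ ^ (d + 1)) := by
  have := Fintype.ofFinite ι
  have hI := isHomogeneous_iInf_pointIdeal_pow P m
  have hsat (u) (hu : L * u ∈ ⨅ i, pointIdeal (P i) ^ m i) : u ∈ ⨅ i, pointIdeal (P i) ^ m i :=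
    (Submodule.mem_iInf _).2 fun i ↦
      mem_pointIdeal_pow_of_mul_mem hL (hP i) ((Submodule.mem_iInf _).1 hu i)
  have hsum := pow_sum_le_iInf_pow_sup (fun i ↦ idealOfVars_le_pointIdeal_sup hL (hP i)) m
  have hpow := pow_le_sup_of_regCM_le hI hL hL0 hsat hsum hd
  rw [add_comm] at hpow ⊢
  exact regularAlong_inf_pow hI hL hsat hpow

theorem mem_pow_mul_pow_of_pow_mul_mem {k : Type*} [Field k] {L : MvPolynomial (Fin 3) k}
    (hL : L.IsHomogeneous 1) (hL0 : L ≠ 0) {I : Ideal (MvPolynomial (Fin 3) k)} {n : ℕ}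
    (hI : RegularAlong L n (I ⊓ idealOfVars (Fin 3) k ^ n)) {r N : ℕ} {f : MvPolynomial (Fin 3) k}
    (hf : f ∈ idealOfVars (Fin 3) k ^ (r * (n + 1))) (hN : L ^ N * f ∈ I ^ r) :
    f ∈ idealOfVars (Fin 3) k ^ r * I ^ r := by
  have hLn : L ^ n ∈ idealOfVars (Fin 3) k ^ n := mem_pow_idealOfVars_of_isHomogeneous (by
    simpa using hL.pow n)
  have hLI : Ideal.span {L ^ n} * I ≤ I ⊓ idealOfVars (Fin 3) k ^ n :=
    le_inf Ideal.mul_le_right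
      (Ideal.mul_le_left.trans ((Ideal.span_singleton_le_iff_mem _).2 hLn))
  have hmem : L ^ (n * r + N) * f ∈ (I ⊓ idealOfVars (Fin 3) k ^ n) ^ r := by
    refine Ideal.pow_right_mono hLI r ?_
    rw [mul_pow, Ideal.span_singleton_pow, pow_add, mul_assoc, pow_mul]
    exact Ideal.mul_mem_mul (Ideal.mem_span_singleton_self _) hN
  have hreg := hI.pow hL hL0 r
  have hfr := hreg.mem_of_pow_mul_mem (Ideal.pow_le_pow_right (by gcongr; omega) hf) hmem
  rw [mul_add_one, add_comm] at hf
  exact Ideal.mul_mono_right (Ideal.pow_right_mono inf_le_left r)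
    (hreg.generatedInDegree.inf_pow_le r ⟨hfr, hf⟩)

end FatPoints

open FatPoints

/- `regCM` only compares Hilbert function values in degrees `d ≥ 0`, so it is `0` instead of `1` for
a single reduced point; the maximum with `1` corrects this. -/
theorem fatPoints_symbolic_containment_general {ι : Type*} [Finite ι] (P : ι → (Fin 3 → ℂ))
    (hP : ∀ i, P i ≠ 0) (hdistinct : ∀ i j : ι, i ≠ j → ∀ c : ℂ, c • P i ≠ P j) (m : ι → ℕ)
    {q r : ℕ} (hrq : r ≤ q)
    (halpha : r * (max (regCM (⨅ i, pointIdeal (P i) ^ m i)) 1 + 1) ≤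
      initialDegree (⨅ i, pointIdeal (P i) ^ (q * m i))) :
    (⨅ i, pointIdeal (P i) ^ (q * m i)) ≤
      (Ideal.span (Set.range (MvPolynomial.X (R := ℂ) (σ := Fin 3)))) ^ r *
        (⨅ i, pointIdeal (P i) ^ m i) ^ r := by
  obtain ⟨L, hL, hL0, hLP⟩ := exists_isHomogeneous_one_forall_eval_ne_zero hP
  have hLM : L ∈ idealOfVars (Fin 3) ℂ := by
    simpa using mem_pow_idealOfVars_of_isHomogeneous hL
  obtain ⟨N, hN⟩ := exists_pow_mul_mem_iInf_pow_pow (fun i j hij ↦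
    idealOfVars_le_pointIdeal_sup_pointIdeal (hP i) (hdistinct i j hij) hLM) m hrq
  obtain ⟨d, hd⟩ := Nat.exists_eq_add_of_le' (le_max_right (regCM (⨅ i, pointIdeal (P i) ^ m i)) 1)
  have hreg := regularAlong_iInf_pointIdeal_pow hL hL0 hLP m (hd ▸ le_max_left _ _)
  rw [hd] at halpha
  exact fun f hf ↦ mem_pow_mul_pow_of_pow_mul_mem hL hL0 hreg
    (le_pow_idealOfVars_of_le_initialDegree (isHomogeneous_iInf_pointIdeal_pow P _) halpha hf)
    (hN f hf)

/-- Corollary 4.3 (cor:hahu): let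
`I = 𝔪_{P_1}^{m_1} ∩ … ∩ 𝔪_{P_s}^{m_s}` be a fat points ideal in `ℙ²` and `M`
the irrelevant ideal.  If `α(I^{(2r)}) ≥ r·(reg(I) + 1)`, where
`I^{(2r)} = 𝔪_{P_1}^{2r·m_1} ∩ … ∩ 𝔪_{P_s}^{2r·m_s}` is the symbolic power,
then `I^{(2r)} ⊆ M^r · I^r`. -/
theorem fatPoints_symbolic_containment (s : ℕ) (hs : 0 < s)
    (P : Fin s → (Fin 3 → ℂ)) (hP : ∀ i, P i ≠ 0)
    (hdistinct : ∀ i j : Fin s, i ≠ j → ∀ c : ℂ, c • P i ≠ P j)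
    (m : Fin s → ℕ) (hm : ∀ i, 0 < m i) (r : ℕ) (hr : 0 < r)
    (halpha : r * (regCM (⨅ i, pointIdeal (P i) ^ m i) + 1) ≤
      initialDegree (⨅ i, pointIdeal (P i) ^ (2 * r * m i))) :
    (⨅ i, pointIdeal (P i) ^ (2 * r * m i)) ≤
      (Ideal.span (Set.range (MvPolynomial.X (R := ℂ) (σ := Fin 3)))) ^ r *
        (⨅ i, pointIdeal (P i) ^ m i) ^ r := by
  have hJ : r * 2 ≤ initialDegree (⨅ i, pointIdeal (P i) ^ (2 * r * m i)) :=
    calc r * 2 ≤ 2 * r * m ⟨0, hs⟩ := mul_comm r 2 ▸ Nat.le_mul_of_pos_right _ (hm _)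
      _ ≤ _ := le_initialDegree_iInf_pointIdeal_pow (m := fun i ↦ 2 * r * m i) ⟨0, hs⟩
        (halpha.trans_lt' (by positivity))
  refine fatPoints_symbolic_containment_general P hP hdistinct m (by omega) ?_
  rw [← max_add_add_right, ← Nat.mul_max_mul_left]
  exact max_le halpha hJ
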